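/- arXiv:2405.01848 — 6 statements merged into one kernel-verified Lean document; each statement's English description precedes it below -/
import Mathlib

section
/- Let n ≥ 1, let rel : Fin n → ℝ, let σ be a permutation of Fin n, let g : ℝ → ℝ be monotone nondecreasing, and let h : Fin n → ℝ be antitone (h(p) ≥ h(q) whenever p ≤ q). If p < q are rank positions with rel(σ(q)) ≥ rel(σ(p)) (the document at the worse position q is at least as relevant as the document at the better position p), then GREM(rel, σ ∘ swap(p,q)) ≥ GREM(rel, σ), where swap(p,q) is the transposition of p and q. (Position Sensitivity of GREM-form metrics.) -/
/-- Generalized Ranking Effectiveness Metric: for relevance scores `rel`,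
ranking permutation `σ` (σ k is the document at rank position k),
gain `g` and discount `h`, `GREM = ∑ k, g (rel (σ k)) * h k`. -/
noncomputable def GREM {n : ℕ} (rel : Fin n → ℝ) (σ : Equiv.Perm (Fin n))
    (g : ℝ → ℝ) (h : Fin n → ℝ) : ℝ :=
  ∑ k, g (rel (σ k)) * h k

/-- Position Sensitivity of GREM-form metrics: swapping positions `p < q` so
that the at-least-as-relevant document at the worse position `q` moves to the
better position `p` does not decrease the metric. -/
theorem grem_position_sensitivity (n : ℕ) (hn : 1 ≤ n)
    (rel : Fin n → ℝ) (σ : Equiv.Perm (Fin n))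
    (g : ℝ → ℝ) (hg : Monotone g) (h : Fin n → ℝ) (hh : Antitone h)
    (p q : Fin n) (hpq : p < q) (hrel : rel (σ p) ≤ rel (σ q)) :
    GREM rel σ g h ≤ GREM rel (σ * Equiv.swap p q) g h := by
  have h1 : g (rel (σ p)) ≤ g (rel (σ q)) := hg hrel
  have h2 : h q ≤ h p := hh hpq.le
  have hne : p ≠ q := hpq.ne
  unfold GREM
  have hq : q ∈ Finset.univ.erase p := by simp [hne.symm]
  rw [← Finset.add_sum_erase _ _ (Finset.mem_univ p), ← Finset.add_sum_erase _ _ hq,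
    ← Finset.add_sum_erase _ (fun k => g (rel ((σ * Equiv.swap p q) k)) * h k)
      (Finset.mem_univ p),
    ← Finset.add_sum_erase _ (fun k => g (rel ((σ * Equiv.swap p q) k)) * h k) hq]
  have hs : ∑ k ∈ (Finset.univ.erase p).erase q, g (rel ((σ * Equiv.swap p q) k)) * h k
      = ∑ k ∈ (Finset.univ.erase p).erase q, g (rel (σ k)) * h k := by
    refine Finset.sum_congr rfl fun k hk => ?_
    simp only [Finset.mem_erase] at hk
    rw [Equiv.Perm.mul_apply, Equiv.swap_apply_of_ne_of_ne hk.2.1 hk.1]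
  rw [hs]
  simp only [Equiv.Perm.mul_apply, Equiv.swap_apply_left, Equiv.swap_apply_right]
  nlinarith [mul_nonneg (sub_nonneg.2 h1) (sub_nonneg.2 h2)]
end

section
/- Let n ≥ 1 and let φ : (Fin n → ℝ) → ℝ be twice continuously differentiable. Suppose that for all indices i ≠ j and all x : Fin n → ℝ, the second derivative of φ at x evaluated in the coordinate directions e_i and e_j vanishes, i.e. the derivative in direction e_j of the function x ↦ (fderiv φ x)(e_i) is identically zero, where e_i is the function that is 1 at coordinate i and 0 elsewhere. Then φ is additively separable: there exist functions f_j : ℝ → ℝ for each j : Fin n such that φ(x) = ∑_{j} f_j(x(j)) for all x. -/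
/-- A continuous linear functional vanishing on coordinate vectors is zero. -/
theorem aux_clm_zero {n : ℕ} (L : (Fin n → ℝ) →L[ℝ] ℝ)
    (h : ∀ j, L (Pi.single j (1 : ℝ)) = 0) : L = 0 := by
  apply ContinuousLinearMap.coe_injective
  apply (Pi.basisFun ℝ (Fin n)).ext
  intro j
  simpa using h j

/-- Additive separability from vanishing mixed second partial derivatives:
if a `C²` function `φ` of `n` real variables has all mixed second partials
(in distinct coordinate directions) identically zero, then it can be written
as a sum of single-variable functions. -/
theorem additively_separable_of_mixed_partials_zero (n : ℕ) (hn : 1 ≤ n)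
    (φ : (Fin n → ℝ) → ℝ) (hφ : ContDiff ℝ 2 φ)
    (hmix : ∀ i j : Fin n, i ≠ j → ∀ x : Fin n → ℝ,
      fderiv ℝ (fun y => fderiv ℝ φ y (Pi.single i (1 : ℝ))) x (Pi.single j (1 : ℝ)) = 0) :
    ∃ f : Fin n → ℝ → ℝ, ∀ x : Fin n → ℝ, φ x = ∑ j, f j (x j) := by
  have hd : Differentiable ℝ φ := hφ.differentiable (by norm_num)
  have hd1 : Differentiable ℝ (fderiv ℝ φ) :=
    (hφ.fderiv_right (m := 1) (by norm_num)).differentiable (by norm_num)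
  let P : Fin n → (Fin n → ℝ) →L[ℝ] (Fin n → ℝ) := fun j =>
    (ContinuousLinearMap.single ℝ (fun _ : Fin n => ℝ) j).comp (ContinuousLinearMap.proj j)
  have hP : ∀ j x, P j x = Pi.single j (x j) := fun j x => rfl
  have key : ∀ i x, fderiv ℝ φ x (Pi.single i 1) = fderiv ℝ φ (P i x) (Pi.single i 1) := by
    intro i x
    let g : (Fin n → ℝ) → ℝ := fun y => fderiv ℝ φ y (Pi.single i (1 : ℝ))
    have hg : Differentiable ℝ g := fun y => (hd1 y).clm_apply (differentiableAt_const _)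
    have hk : ∀ y, HasFDerivAt (fun y => g (P i x + (ContinuousLinearMap.id ℝ (Fin n → ℝ) - P i) y))
        ((fderiv ℝ g (P i x + (ContinuousLinearMap.id ℝ (Fin n → ℝ) - P i) y)).comp
          (ContinuousLinearMap.id ℝ (Fin n → ℝ) - P i)) y := fun y =>
      (hg _).hasFDerivAt.comp y
        ((ContinuousLinearMap.id ℝ (Fin n → ℝ) - P i).hasFDerivAt.const_add (P i x))
    have hc := is_const_of_fderiv_eq_zero (𝕜 := ℝ) (fun y => (hk y).differentiableAt)
      (fun y => by
        rw [(hk y).fderiv]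
        apply aux_clm_zero
        intro j
        by_cases hij : i = j
        · subst hij
          simp [hP]
        · have := hmix i j hij (P i x + (ContinuousLinearMap.id ℝ (Fin n → ℝ) - P i) y)
          simpa [hP, Pi.single_eq_of_ne hij] using this) x 0
    simpa [g] using hc
  have hψ : ∀ x, HasFDerivAt (fun x => φ x - ∑ j, φ (P j x))
      (fderiv ℝ φ x - ∑ j, (fderiv ℝ φ (P j x)).comp (P j)) x := fun x =>
    (hd x).hasFDerivAt.sub
      (HasFDerivAt.fun_sum fun j _ => (hd _).hasFDerivAt.comp x (P j).hasFDerivAt)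
  have hc := fun x => is_const_of_fderiv_eq_zero (𝕜 := ℝ) (fun y => (hψ y).differentiableAt)
    (fun y => by
      rw [(hψ y).fderiv]
      apply aux_clm_zero
      intro i
      have h0 : ∀ j, j ≠ i → fderiv ℝ φ (P j y) (P j (Pi.single i 1)) = 0 := by
        intro j hj
        simp [hP, Pi.single_eq_of_ne hj]
      have hs : ∑ j, fderiv ℝ φ (P j y) (P j (Pi.single i 1))
          = fderiv ℝ φ (P i y) (P i (Pi.single i 1)) :=
        Finset.sum_eq_single i (fun j _ hj => h0 j hj) (by simp)
      have hi : P i (Pi.single i 1) = Pi.single i 1 := by simp [hP]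
      simp only [sub_apply, sum_apply,
        ContinuousLinearMap.comp_apply]
      rw [hs, hi, key i y, sub_self]) x 0
  refine ⟨fun j t => φ (Pi.single j t) + (φ 0 - ∑ j, φ (P j 0)) / n, fun x => ?_⟩
  have h := hc x
  have hn' : (n : ℝ) ≠ 0 := by positivity
  simp only [Finset.sum_add_distrib, Finset.sum_const, Finset.card_univ, Fintype.card_fin,
    nsmul_eq_mul, mul_div_cancel₀ _ hn']
  rw [← h]
  simp only [hP]
  ring
end

section
/- Let n ≥ 1 and let φ : (Fin n → ℝ) → ℝ be of the additively separable form φ(x) = ∑_{j} f_j(x(j)) for functions f_j : ℝ → ℝ. Suppose φ satisfies Position Sensitivity: for all x : Fin n → ℝ and all indices p < q with x(p) ≤ x(q), one has φ(x ∘ swap(p,q)) ≥ φ(x), where swap(p,q) is the transposition of p and q. Then for all indices i < j, the function f_i − f_j is monotone nondecreasing, i.e. for all real a ≥ b, f_i(a) + f_j(b) ≥ f_i(b) + f_j(a). -/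
/-- For an additively separable metric `φ x = ∑ j, f j (x j)` satisfying
Position Sensitivity, the differences `f i − f j` (for `i < j`) are monotone
nondecreasing: for `a ≥ b`, `f i a + f j b ≥ f i b + f j a`. -/
theorem position_sensitivity_implies_ordered_components (n : ℕ) (hn : 1 ≤ n)
    (f : Fin n → ℝ → ℝ) (φ : (Fin n → ℝ) → ℝ)
    (hφ : ∀ x : Fin n → ℝ, φ x = ∑ j, f j (x j))
    (hPS : ∀ (x : Fin n → ℝ) (p q : Fin n), p < q → x p ≤ x q →
      φ x ≤ φ (x ∘ Equiv.swap p q)) :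
    ∀ i j : Fin n, i < j → ∀ a b : ℝ, b ≤ a →
      f i b + f j a ≤ f i a + f j b := by
  intro i j hij a b hab
  have hne : i ≠ j := ne_of_lt hij
  have h := hPS (fun k => if k = j then a else b) i j hij (by simpa [hne] using hab)
  rw [hφ, hφ, ← sub_nonneg, ← Finset.sum_sub_distrib, Fintype.sum_eq_add i j hne] at h
  · simp [hne] at h
    linarith
  · rintro k ⟨hi, hj⟩
    simp [Equiv.swap_apply_of_ne_of_ne hi hj]
end

section
/- Let m ≥ 1, let v : Finset (Fin m) → ℝ be a characteristic function, and let i, j : Fin m be distinct players. If for every subset S ⊆ univ \ {i, j} one has v(S ∪ {i}) = v(S ∪ {j}), then φ_i(v) = φ_j(v). (Symmetry axiom for the Shapley value.) -/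
/-- The Shapley value of player `i` in the game with characteristic function
`v` on the player set `Fin m`:
`φ_i(v) = ∑_{S ⊆ univ \ {i}} (|S|! (m−|S|−1)! / m!) (v(S ∪ {i}) − v(S))`. -/
noncomputable def shapley {m : ℕ} (v : Finset (Fin m) → ℝ) (i : Fin m) : ℝ :=
  ∑ S ∈ (Finset.univ.erase i).powerset,
    ((S.card.factorial * (m - S.card - 1).factorial : ℝ) / (m.factorial : ℝ))
      * (v (insert i S) - v S)

/-- Symmetry axiom: two players that contribute equally to every coalition
excluding both of them receive equal Shapley values. -/
theorem shapley_symmetry (m : ℕ) (hm : 1 ≤ m) (v : Finset (Fin m) → ℝ)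
    (i j : Fin m) (hij : i ≠ j)
    (hsym : ∀ S ⊆ (Finset.univ.erase i).erase j, v (insert i S) = v (insert j S)) :
    shapley v i = shapley v j := by
  have hi : Finset.univ.erase i = insert j ((Finset.univ.erase i).erase j) := by
    rw [Finset.insert_erase]
    simp [hij.symm]
  have hj : Finset.univ.erase j = insert i ((Finset.univ.erase i).erase j) := by
    rw [Finset.erase_right_comm, Finset.insert_erase]
    simp [hij]
  have hjn : j ∉ (Finset.univ.erase i).erase j := by simp
  have hin : i ∉ (Finset.univ.erase i).erase j := by simp
  unfold shapley
  rw [hi, hj, Finset.sum_powerset_insert hjn, Finset.sum_powerset_insert hin]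
  congr 1
  · refine Finset.sum_congr rfl fun S hS => ?_
    rw [hsym S (Finset.mem_powerset.mp hS)]
  · refine Finset.sum_congr rfl fun S hS => ?_
    have hS' := Finset.mem_powerset.mp hS
    rw [Finset.card_insert_of_notMem (fun h => hjn (hS' h)),
      Finset.card_insert_of_notMem (fun h => hin (hS' h)),
      hsym S hS', Finset.insert_comm]
end

section
/- Let m ≥ 1, let v, w : Finset (Fin m) → ℝ be two characteristic functions, and let i : Fin m. If for every subset S ⊆ univ \ {i} one has v(S ∪ {i}) − v(S) ≥ w(S ∪ {i}) − w(S), then φ_i(v) ≥ φ_i(w). (Strong monotonicity of the Shapley value.) -/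
/-- Strong monotonicity of the Shapley value: if player `i`'s marginal
contribution in `v` dominates that in `w` for every coalition, then its
Shapley value in `v` is at least its Shapley value in `w`. -/
theorem shapley_monotonicity (m : ℕ) (hm : 1 ≤ m)
    (v w : Finset (Fin m) → ℝ) (i : Fin m)
    (hmono : ∀ S ⊆ Finset.univ.erase i,
      w (insert i S) - w S ≤ v (insert i S) - v S) :
    shapley w i ≤ shapley v i := by
  unfold shapley
  refine Finset.sum_le_sum fun S hS => ?_
  exact mul_le_mul_of_nonneg_left (hmono S (Finset.mem_powerset.mp hS)) (by positivity)
end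

section
/- Let m ≥ 1 and let ψ be a map assigning to every characteristic function v : Finset (Fin m) → ℝ an attribution vector ψ(v) : Fin m → ℝ. Suppose ψ satisfies: (i) Efficiency: ∑_{i} ψ(v)(i) = v(univ) − v(∅) for all v; (ii) Symmetry: if i ≠ j and v(S ∪ {i}) = v(S ∪ {j}) for all S ⊆ univ \ {i, j}, then ψ(v)(i) = ψ(v)(j); and (iii) Strong Monotonicity: if v(S ∪ {i}) − v(S) ≥ w(S ∪ {i}) − w(S) for all S ⊆ univ \ {i}, then ψ(v)(i) ≥ ψ(w)(i). Then ψ is the Shapley value: for every v and every i, ψ(v)(i) = φ_i(v) = ∑_{S ⊆ univ \ {i}} (|S|! · (m − |S| − 1)! / m!) · (v(S ∪ {i}) − v(S)). (Uniqueness of the Shapley value; this is the theorem underlying the paper's Theorem 2 on RankSHAP.) -/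
namespace ShapAux

open Finset

lemma shapley_eff {m : ℕ} (hm : 1 ≤ m) (v : Finset (Fin m) → ℝ) :
    ∑ i : Fin m, shapley v i = v Finset.univ - v ∅ := by
  set w : ℕ → ℝ := fun k => ((k.factorial * (m - k - 1).factorial : ℝ) / (m.factorial : ℝ)) with hw
  have hmf : (m.factorial : ℝ) ≠ 0 := by exact_mod_cast m.factorial_ne_zero
  have h1 : ∀ i : Fin m, shapley v i =
      ∑ T : Finset (Fin m), (if i ∈ T then w (T.card - 1) * v T else 0)
      - ∑ T : Finset (Fin m), (if i ∈ T then 0 else w T.card * v T) := by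
    intro i
    have e1 : ∑ T : Finset (Fin m), (if i ∈ T then 0 else w T.card * v T)
        = ∑ S ∈ (Finset.univ.erase i).powerset, w S.card * v S := by
      have : (Finset.univ.erase i).powerset = (Finset.univ.filter fun T : Finset (Fin m) => ¬ i ∈ T) := by
        ext T
        simp [Finset.subset_erase]
      rw [this, Finset.sum_filter]
      apply Finset.sum_congr rfl
      intro T _
      by_cases h : i ∈ T <;> simp [h]
    have e2 : ∑ T : Finset (Fin m), (if i ∈ T then w (T.card - 1) * v T else 0)
        = ∑ S ∈ (Finset.univ.erase i).powerset, w S.card * v (insert i S) := by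
      rw [← Finset.sum_filter]
      symm
      refine Finset.sum_bij' (fun S _ => insert i S) (fun T _ => T.erase i) ?_ ?_ ?_ ?_ ?_
      · intro S hS; simp
      · intro T hT; simp [Finset.subset_erase]
      · intro S hS
        have : i ∉ S := by simpa [Finset.subset_erase] using hS
        simp [this]
      · intro T hT
        have : i ∈ T := by simpa using hT
        simp [this]
      · intro S hS
        have : i ∉ S := by simpa [Finset.subset_erase] using hS
        simp [this]
    rw [e1, e2, ← Finset.sum_sub_distrib]
    unfold shapley
    apply Finset.sum_congr rfl
    intro S _
    simp only [hw]
    ring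
  simp_rw [h1]
  rw [Finset.sum_sub_distrib, Finset.sum_comm, Finset.sum_comm (s := Finset.univ (α := Fin m)),
    ← Finset.sum_sub_distrib]
  have h2 : ∀ T : Finset (Fin m),
      (∑ i : Fin m, (if i ∈ T then w (T.card - 1) * v T else 0))
      - ∑ i : Fin m, (if i ∈ T then 0 else w T.card * v T)
      = (if T = Finset.univ then v T else 0) - (if T = ∅ then v T else 0) := by
    intro T
    have a1 : (∑ i : Fin m, (if i ∈ T then w (T.card - 1) * v T else 0))
        = T.card * (w (T.card - 1) * v T) := by
      rw [← Finset.sum_filter]; simp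
    have a2 : (∑ i : Fin m, (if i ∈ T then 0 else w T.card * v T))
        = ((m - T.card : ℕ) : ℝ) * (w T.card * v T) := by
      have : ∀ i : Fin m, (if i ∈ T then 0 else w T.card * v T)
        = if i ∈ Tᶜ then w T.card * v T else 0 := by
        intro i; by_cases h : i ∈ T <;> simp [h]
      simp_rw [this]
      rw [Finset.sum_ite_mem, Finset.univ_inter, Finset.sum_const, Finset.card_compl]; simp
    rw [a1, a2]
    have hle : T.card ≤ m := by simpa using Finset.card_le_univ T
    have b1 : (T.card : ℝ) * w (T.card - 1) =
        if T.card = 0 then 0 else (T.card.factorial * (m - T.card).factorial : ℝ) / m.factorial := by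
      rcases hc : T.card with _ | k
      · simp
      · have : m - k - 1 = m - (k+1) := by omega
        simp only [hw, Nat.add_sub_cancel, this, Nat.factorial_succ]
        rw [if_neg (Nat.succ_ne_zero k)]
        push_cast
        ring
    have b2 : ((m - T.card : ℕ) : ℝ) * w T.card =
        if T.card = m then 0 else (T.card.factorial * (m - T.card).factorial : ℝ) / m.factorial := by
      by_cases hc : T.card = m
      · simp [hc]
      · obtain ⟨k, hk⟩ : ∃ k, m - T.card = k + 1 := ⟨m - T.card - 1, by omega⟩
        simp only [hw, hk, Nat.add_sub_cancel, Nat.factorial_succ, if_neg hc]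
        push_cast
        ring
    rw [← mul_assoc, ← mul_assoc, b1, b2]
    have c1 : T = Finset.univ ↔ T.card = m := by
      rw [← Finset.card_eq_iff_eq_univ]; simp
    have c2 : T = ∅ ↔ T.card = 0 := by simp
    by_cases d1 : T.card = m
    · have d2 : T.card ≠ 0 := by omega
      rw [if_neg d2, if_pos d1, if_pos (c1.2 d1), if_neg (fun h => d2 (c2.1 h)), d1]
      simp [hmf]
    · by_cases d2 : T.card = 0
      · rw [if_pos d2, if_neg d1, if_neg (fun h => d1 (c1.1 h)), if_pos (c2.2 d2), d2]
        simp [hmf]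
      · rw [if_neg d2, if_neg d1, if_neg (fun h => d1 (c1.1 h)), if_neg (fun h => d2 (c2.1 h))]
        simp
  simp_rw [h2]
  rw [Finset.sum_sub_distrib]
  simp

lemma swap_inv {m : ℕ} (v : Finset (Fin m) → ℝ) (i j : Fin m) (hij : i ≠ j)
    (h : ∀ S ⊆ (Finset.univ.erase i).erase j, v (insert i S) = v (insert j S))
    (S : Finset (Fin m)) : v (S.image (Equiv.swap i j)) = v S := by
  have key : ∀ R : Finset (Fin m), i ∉ R → j ∉ R → R.image (Equiv.swap i j) = R := by
    intro R hi hj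
    have : R.image (Equiv.swap i j) = R.image id := by
      apply Finset.image_congr
      intro x hx
      exact Equiv.swap_apply_of_ne_of_ne (fun e => hi (e ▸ hx)) (fun e => hj (e ▸ hx))
    simpa using this
  set R := (S.erase i).erase j with hR
  have hi : i ∉ R := by simp [hR]
  have hj : j ∉ R := by simp [hR]
  have hv := h R (by simp [Finset.subset_erase, hi, hj])
  by_cases h1 : i ∈ S <;> by_cases h2 : j ∈ S
  · have : S = insert i (insert j R) := by ext x; simp [hR]; grind
    rw [this, Finset.image_insert, Finset.image_insert, key R hi hj]
    simp [Finset.insert_comm]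
  · have : S = insert i R := by ext x; simp [hR]; grind
    rw [this, Finset.image_insert, key R hi hj]
    simp [hv]
  · have : S = insert j R := by ext x; simp [hR]; grind
    rw [this, Finset.image_insert, key R hi hj]
    simp [hv]
  · rw [key S h1 h2]

lemma shapley_sym {m : ℕ} (v : Finset (Fin m) → ℝ) (i j : Fin m) (hij : i ≠ j)
    (h : ∀ S ⊆ (Finset.univ.erase i).erase j, v (insert i S) = v (insert j S)) :
    shapley v i = shapley v j := by
  unfold shapley
  have hinv : ∀ S : Finset (Fin m), (S.image (Equiv.swap i j)).image (Equiv.swap i j) = S := by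
    intro S
    rw [Finset.image_image]
    have : (Equiv.swap i j : Fin m → Fin m) ∘ (Equiv.swap i j) = id := by ext x; simp
    rw [this, Finset.image_id]
  refine Finset.sum_bij' (fun S _ => S.image (Equiv.swap i j))
    (fun S _ => S.image (Equiv.swap i j)) ?_ ?_ ?_ ?_ ?_
  · intro S hS
    have hS' : i ∉ S := by simpa [Finset.subset_erase] using hS
    simp only [Finset.mem_powerset, Finset.subset_erase, Finset.mem_image]
    refine ⟨Finset.subset_univ _, ?_⟩
    rintro ⟨x, hx, e⟩
    rw [Equiv.swap_apply_eq_iff, Equiv.swap_apply_right] at e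
    exact hS' (e ▸ hx)
  · intro S hS
    have hS' : j ∉ S := by simpa [Finset.subset_erase] using hS
    simp only [Finset.mem_powerset, Finset.subset_erase, Finset.mem_image]
    refine ⟨Finset.subset_univ _, ?_⟩
    rintro ⟨x, hx, e⟩
    rw [Equiv.swap_apply_eq_iff, Equiv.swap_apply_left] at e
    exact hS' (e ▸ hx)
  · intro S _; exact hinv S
  · intro S _; exact hinv S
  · intro S _
    have e1 : insert j (S.image (Equiv.swap i j)) = (insert i S).image (Equiv.swap i j) := by
      rw [Finset.image_insert]; simp
    rw [e1, swap_inv v i j hij h, swap_inv v i j hij h,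
      Finset.card_image_of_injective _ (Equiv.swap i j).injective]

lemma moebius {m : ℕ} (v : Finset (Fin m) → ℝ) (n : ℕ) :
    ∃ a : Finset (Fin m) → ℝ, ∀ S : Finset (Fin m), S.card < n → v S = ∑ T ∈ S.powerset, a T := by
  induction n with
  | zero => exact ⟨0, by simp⟩
  | succ n ih =>
    obtain ⟨a, ha⟩ := ih
    refine ⟨fun T => if T.card < n then a T else v T - ∑ U ∈ T.ssubsets, a U, ?_⟩
    intro S hS
    by_cases hc : S.card < n
    · rw [ha S hc]
      apply Finset.sum_congr rfl
      intro T hT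
      simp only []
      rw [if_pos (lt_of_le_of_lt (Finset.card_le_card (Finset.mem_powerset.1 hT)) hc)]
    · have hp : S.powerset = insert S S.ssubsets := by
        ext T; simp [Finset.mem_ssubsets, subset_iff_ssubset_or_eq, or_comm]
      rw [hp, Finset.sum_insert (by simp), if_neg hc]
      have hg : ∑ T ∈ S.ssubsets, (if T.card < n then a T else v T - ∑ U ∈ T.ssubsets, a U)
          = ∑ T ∈ S.ssubsets, a T := by
        apply Finset.sum_congr rfl
        intro T hT
        have := Finset.card_lt_card (Finset.mem_ssubsets.1 hT)
        rw [if_pos (by omega)]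
      rw [hg]
      ring

/-- The game generated by unanimity games in a family. -/
def game {m : ℕ} (a : Finset (Fin m) → ℝ) (I : Finset (Finset (Fin m))) (S : Finset (Fin m)) : ℝ :=
  ∑ T ∈ I, if T ⊆ S then a T else 0

lemma uniq {m : ℕ} (ψ φ : (Finset (Fin m) → ℝ) → (Fin m → ℝ))
    (hE : ∀ v, ∑ i : Fin m, ψ v i = ∑ i : Fin m, φ v i)
    (hS1 : ∀ (v : Finset (Fin m) → ℝ) (i j : Fin m), i ≠ j →
      (∀ S ⊆ (Finset.univ.erase i).erase j, v (insert i S) = v (insert j S)) →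
      ψ v i = ψ v j)
    (hS2 : ∀ (v : Finset (Fin m) → ℝ) (i j : Fin m), i ≠ j →
      (∀ S ⊆ (Finset.univ.erase i).erase j, v (insert i S) = v (insert j S)) →
      φ v i = φ v j)
    (hM1 : ∀ (v w : Finset (Fin m) → ℝ) (i : Fin m),
      (∀ S ⊆ Finset.univ.erase i, w (insert i S) - w S = v (insert i S) - v S) → ψ w i = ψ v i)
    (hM2 : ∀ (v w : Finset (Fin m) → ℝ) (i : Fin m),
      (∀ S ⊆ Finset.univ.erase i, w (insert i S) - w S = v (insert i S) - v S) → φ w i = φ v i)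
    (a : Finset (Fin m) → ℝ) (I : Finset (Finset (Fin m))) :
    ∀ i, ψ (game a I) i = φ (game a I) i := by
  induction I using Finset.strongInduction with
  | H I ih =>
    have hout : ∀ i, (∃ T ∈ I, i ∉ T) → ψ (game a I) i = φ (game a I) i := by
      rintro i ⟨T, hT, hi⟩
      have hm : ∀ S ⊆ Finset.univ.erase i,
          game a I (insert i S) - game a I S
            = game a (I.erase T) (insert i S) - game a (I.erase T) S := by
        intro S _
        unfold game
        rw [← Finset.add_sum_erase I _ hT, ← Finset.add_sum_erase I _ hT]
        have : T ⊆ insert i S ↔ T ⊆ S := Finset.subset_insert_iff_of_notMem hi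
        simp only [this]
        ring
      rw [hM1 _ _ i hm, hM2 _ _ i hm]
      exact ih _ (Finset.erase_ssubset hT) i
    intro i
    by_cases hi : ∃ T ∈ I, i ∉ T
    · exact hout i hi
    push Not at hi
    have hz : ∀ k, (∀ T ∈ I, k ∈ T) → ∀ S : Finset (Fin m), k ∉ S → game a I S = 0 := by
      intro k hk S hS
      unfold game
      apply Finset.sum_eq_zero
      intro T hT
      rw [if_neg (fun h => hS (h (hk T hT)))]
    have hd : ∀ j, ψ (game a I) j - φ (game a I) j =
        if (∀ T ∈ I, j ∈ T) then ψ (game a I) i - φ (game a I) i else 0 := by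
      intro j
      split_ifs with hj
      · by_cases hij : i = j
        · rw [hij]
        · have hs : ∀ S ⊆ (Finset.univ.erase i).erase j,
              game a I (insert i S) = game a I (insert j S) := by
            intro S hS
            rw [Finset.subset_erase, Finset.subset_erase] at hS
            rw [hz j hj _ (by simp [hS.2, Ne.symm hij]), hz i hi _ (by simp [hS.1.2, hij])]
          rw [hS1 _ i j hij hs, hS2 _ i j hij hs]
      · push Not at hj
        rw [hout j hj, sub_self]
    have hsum : ∑ j, (ψ (game a I) j - φ (game a I) j) = 0 := by
      rw [Finset.sum_sub_distrib, hE, sub_self]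
    rw [Finset.sum_congr rfl (fun j _ => hd j)] at hsum
    rw [← Finset.sum_filter, Finset.sum_const, smul_eq_zero] at hsum
    rcases hsum with h | h
    · rw [Finset.card_eq_zero] at h
      have : i ∈ (Finset.univ.filter fun j => ∀ T ∈ I, j ∈ T) := by simpa using hi
      rw [h] at this
      simp at this
    · linarith

end ShapAux

/-- Uniqueness of the Shapley value: any attribution map satisfying
Efficiency, Symmetry and Strong Monotonicity coincides with the Shapley
value. -/
theorem shapley_uniqueness (m : ℕ) (hm : 1 ≤ m)
    (ψ : (Finset (Fin m) → ℝ) → (Fin m → ℝ))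
    (hEff : ∀ v : Finset (Fin m) → ℝ,
      ∑ i : Fin m, ψ v i = v Finset.univ - v ∅)
    (hSym : ∀ (v : Finset (Fin m) → ℝ) (i j : Fin m), i ≠ j →
      (∀ S ⊆ (Finset.univ.erase i).erase j, v (insert i S) = v (insert j S)) →
      ψ v i = ψ v j)
    (hMono : ∀ (v w : Finset (Fin m) → ℝ) (i : Fin m),
      (∀ S ⊆ Finset.univ.erase i, w (insert i S) - w S ≤ v (insert i S) - v S) →
      ψ w i ≤ ψ v i) :
    ∀ (v : Finset (Fin m) → ℝ) (i : Fin m), ψ v i = shapley v i := by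
  intro v i
  obtain ⟨a, ha⟩ := ShapAux.moebius v (m + 1)
  have hv : v = ShapAux.game a Finset.univ := by
    funext S
    have hle : S.card ≤ m := by simpa using Finset.card_le_univ S
    rw [ha S (by omega), ShapAux.game, ← Finset.sum_filter]
    congr 1
    ext T
    simp
  rw [hv]
  apply ShapAux.uniq ψ shapley
  · intro v
    rw [hEff, ShapAux.shapley_eff hm]
  · exact hSym
  · exact fun v i j => ShapAux.shapley_sym v i j
  · intro v w i h
    exact le_antisymm (hMono _ _ _ fun S hS => (h S hS).le) (hMono _ _ _ fun S hS => (h S hS).ge)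
  · intro v w i h
    unfold shapley
    apply Finset.sum_congr rfl
    intro S hS
    rw [h S (Finset.mem_powerset.1 hS)]
end
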